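/- arXiv:2402.11921 — 5 statements merged into one kernel-verified Lean document; each statement's English description precedes it below -/
import Mathlib

section
/- Let ρ : [0,1] → (0,1) be continuous and let V : (0,1) → (0,∞) be measurable and satisfy Condition (V1). Suppose u : (0,∞)×(0,1) → [0,1] is measurable and satisfies ∫₀^T ∫₀¹ V(x)(u(s,x) − ρ(x))² dx ds < ∞ for every T > 0. Then for every t > 0, lim_{y→0+} (1/y) ∫₀^t ∫₀^y |u(s,x) − ρ(0)| dx ds = 0 and lim_{y→0+} (1/y) ∫₀^t ∫_{1−y}^1 |u(s,x) − ρ(1)| dx ds = 0. -/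
open MeasureTheory Set Filter Topology

/-- Condition (V1): `limsup_{y→0+} y⁻² ∫₀^y [1/V(x) + 1/V(1−x)] dx < ∞`. -/
def CondV1 (V : ℝ → ℝ) : Prop :=
  Filter.limsup
    (fun y : ℝ => ENNReal.ofReal (1 / y ^ 2) *
      ∫⁻ x in Ioo (0 : ℝ) y, ENNReal.ofReal (1 / V x + 1 / V (1 - x)))
    (𝓝[>] (0 : ℝ)) < ⊤

lemma bdp_core (V ρ : ℝ → ℝ)
    (hVmeas : Measurable V) (hVpos : ∀ x ∈ Ioo (0 : ℝ) 1, 0 < V x)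
    (u : ℝ × ℝ → ℝ)
    (t : ℝ) (ht : 0 < t)
    (henergy : (∫⁻ z in Ioo (0 : ℝ) t ×ˢ Ioo (0 : ℝ) 1,
      ENNReal.ofReal (V z.2 * (u z - ρ z.2) ^ 2)) < ⊤)
    (humeas : Measurable u)
    (S : ℝ → Set ℝ) (hSm : ∀ y, MeasurableSet (S y))
    (hSsub : ∀ y ∈ Ioo (0 : ℝ) 1, S y ⊆ Ioo (0 : ℝ) 1)
    (hSvol : ∀ y, volume (S y) = ENNReal.ofReal y) (r : ℝ)
    (hr : ∀ ε > 0, ∀ᶠ y in 𝓝[>] (0 : ℝ), ∀ x ∈ S y, |ρ x - r| ≤ ε)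
    (K : ℝ) (hK0 : 0 ≤ K)
    (hK : ∀ᶠ y in 𝓝[>] (0 : ℝ), ∫⁻ x in S y, ENNReal.ofReal (1 / V x) ≤
      ENNReal.ofReal (y ^ 2 * K)) :
    Tendsto (fun y : ℝ => (1 / y) * ∫ z in Ioo (0 : ℝ) t ×ˢ S y, |u z - r|)
        (𝓝[>] (0 : ℝ)) (𝓝 0) := by
  set F : ℝ × ℝ → ENNReal := fun z => ENNReal.ofReal (V z.2 * (u z - ρ z.2) ^ 2) with hF
  have hy01 : ∀ᶠ y in 𝓝[>] (0 : ℝ), y ∈ Ioo (0 : ℝ) 1 := Ioo_mem_nhdsGT one_pos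
  have hvol : ∀ y, (volume : Measure (ℝ × ℝ)) (Ioo (0 : ℝ) t ×ˢ S y)
      = ENNReal.ofReal t * ENNReal.ofReal y := by
    intro y
    rw [Measure.volume_eq_prod, Measure.prod_prod, hSvol, Real.volume_Ioo, sub_zero]
  have hE : Tendsto (fun y => ∫⁻ z in Ioo (0 : ℝ) t ×ˢ S y, F z) (𝓝[>] (0 : ℝ)) (𝓝 0) := by
    have h1 : Tendsto (fun y => ∫⁻ z in Ioo (0 : ℝ) t ×ˢ S y, F z
        ∂(volume.restrict (Ioo (0 : ℝ) t ×ˢ Ioo (0 : ℝ) 1))) (𝓝[>] (0 : ℝ)) (𝓝 0) := by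
      apply tendsto_setLIntegral_zero henergy.ne
      have h2 : Tendsto (fun y : ℝ => ENNReal.ofReal t * ENNReal.ofReal y) (𝓝[>] (0 : ℝ)) (𝓝 0) := by
        have h3 : Tendsto (fun y : ℝ => ENNReal.ofReal (t * y)) (𝓝 0) (𝓝 (ENNReal.ofReal (t * 0))) :=
          (ENNReal.continuous_ofReal.comp (continuous_const.mul continuous_id)).tendsto 0
        simp only [mul_zero, ENNReal.ofReal_zero, ENNReal.ofReal_mul ht.le] at h3
        exact h3.mono_left nhdsWithin_le_nhds
      refine tendsto_of_tendsto_of_tendsto_of_le_of_le tendsto_const_nhds h2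
        (fun _ => zero_le) (fun y => ?_)
      rw [← hvol y]
      exact Measure.restrict_apply_le _ _
    refine h1.congr' ?_
    filter_upwards [hy01] with y hy
    rw [Measure.restrict_restrict (measurableSet_Ioo.prod (hSm y)),
      inter_eq_left.2 (prod_mono le_rfl (hSsub y hy))]
  rw [Metric.tendsto_nhds]
  intro η hη
  set M : ℝ := (t * K + 1) / η with hM
  have hMpos : 0 < M := by positivity
  have hev1 : ∀ᶠ y in 𝓝[>] (0 : ℝ), ∫⁻ z in Ioo (0 : ℝ) t ×ˢ S y, F z
      < ENNReal.ofReal (η / (4 * M)) :=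
    hE.eventually_lt_const (by simp; positivity)
  filter_upwards [hy01, hev1, hK, hr (η / (4 * t)) (by positivity)] with y hy h1 h2 h3
  have hy0 : 0 < y := hy.1
  have hpt : ∀ z ∈ Ioo (0 : ℝ) t ×ˢ S y, ENNReal.ofReal |u z - r| ≤
      ENNReal.ofReal (M * y) * F z +
       (ENNReal.ofReal (1 / (4 * M * y)) * ENNReal.ofReal (1 / V z.2)
        + ENNReal.ofReal (η / (4 * t))) := by
    intro z hz
    have hv := hVpos z.2 (hSsub y hy hz.2)
    have h4 := h3 z.2 hz.2
    rw [hF, ← ENNReal.ofReal_mul (by positivity), ← ENNReal.ofReal_mul (by positivity),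
      ← ENNReal.ofReal_add (by positivity) (by positivity),
      ← ENNReal.ofReal_add (by positivity) (by positivity)]
    apply ENNReal.ofReal_le_ofReal
    have h5 : |u z - r| ≤ |u z - ρ z.2| + |ρ z.2 - r| := abs_sub_le _ _ _
    have h6 : |u z - ρ z.2| ≤ M * y * (V z.2 * (u z - ρ z.2) ^ 2)
        + 1 / (4 * M * y) * (1 / V z.2) := by
      rw [← sq_abs]
      set w := |u z - ρ z.2|
      have ha : 0 < M * y * V z.2 := by positivity
      have : M * y * (V z.2 * w ^ 2) + 1 / (4 * M * y) * (1 / V z.2) - w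
          = (2 * (M * y * V z.2) * w - 1) ^ 2 / (4 * (M * y * V z.2)) := by
        field_simp
        ring
      have h7 : 0 ≤ (2 * (M * y * V z.2) * w - 1) ^ 2 / (4 * (M * y * V z.2)) := by positivity
      linarith
    linarith
  have hVm : Measurable fun x => ENNReal.ofReal (1 / V x) := by fun_prop
  have hprod : ∫⁻ z in Ioo (0 : ℝ) t ×ˢ S y, ENNReal.ofReal (1 / V z.2)
      = ENNReal.ofReal t * ∫⁻ x in S y, ENNReal.ofReal (1 / V x) := by
    rw [Measure.volume_eq_prod, ← Measure.prod_restrict]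
    have := lintegral_prod_mul (μ := volume.restrict (Ioo (0 : ℝ) t))
      (ν := volume.restrict (S y)) (f := fun _ => 1) (g := fun x => ENNReal.ofReal (1 / V x))
      aemeasurable_const hVm.aemeasurable
    simpa using this
  have hbound : ∫⁻ z in Ioo (0 : ℝ) t ×ˢ S y, ENNReal.ofReal |u z - r| ≤
      ENNReal.ofReal (y * (3 * η / 4)) := by
    calc _ ≤ ∫⁻ z in Ioo (0 : ℝ) t ×ˢ S y, (ENNReal.ofReal (M * y) * F z +
       (ENNReal.ofReal (1 / (4 * M * y)) * ENNReal.ofReal (1 / V z.2)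
        + ENNReal.ofReal (η / (4 * t)))) :=
          setLIntegral_mono' (measurableSet_Ioo.prod (hSm y)) hpt
      _ = ENNReal.ofReal (M * y) * (∫⁻ z in Ioo (0 : ℝ) t ×ˢ S y, F z) +
          (ENNReal.ofReal (1 / (4 * M * y)) *
            (ENNReal.ofReal t * ∫⁻ x in S y, ENNReal.ofReal (1 / V x))
          + ENNReal.ofReal (η / (4 * t)) * (ENNReal.ofReal t * ENNReal.ofReal y)) := by
          rw [lintegral_add_right _ (by fun_prop), lintegral_const_mul' _ _ ENNReal.ofReal_ne_top,
            lintegral_add_right _ measurable_const, lintegral_const_mul' _ _ ENNReal.ofReal_ne_top,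
            hprod, setLIntegral_const, hvol]
      _ ≤ ENNReal.ofReal (M * y) * ENNReal.ofReal (η / (4 * M)) +
          (ENNReal.ofReal (1 / (4 * M * y)) *
            (ENNReal.ofReal t * ENNReal.ofReal (y ^ 2 * K))
          + ENNReal.ofReal (η / (4 * t)) * (ENNReal.ofReal t * ENNReal.ofReal y)) := by
          gcongr
      _ ≤ _ := by
          rw [← ENNReal.ofReal_mul (by positivity), ← ENNReal.ofReal_mul (by positivity),
            ← ENNReal.ofReal_mul (by positivity), ← ENNReal.ofReal_mul (by positivity),
            ← ENNReal.ofReal_mul (by positivity),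
            ← ENNReal.ofReal_add (by positivity) (by positivity),
            ← ENNReal.ofReal_add (by positivity) (by positivity)]
          apply ENNReal.ofReal_le_ofReal
          have e1 : M * y * (η / (4 * M)) = y * (η / 4) := by field_simp
          have e2 : η / (4 * t) * (t * y) = y * (η / 4) := by field_simp
          have e3 : 1 / (4 * M * y) * (t * (y ^ 2 * K)) = y * (t * K / (4 * M)) := by field_simp
          have e4 : t * K / (4 * M) ≤ η / 4 := by
            rw [div_le_div_iff₀ (by positivity) (by positivity)]
            have : η * M = t * K + 1 := by rw [hM]; field_simp
            nlinarith
          rw [e1, e2, e3]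
          nlinarith
  have hreal : ∫ z in Ioo (0 : ℝ) t ×ˢ S y, |u z - r| ≤ y * (3 * η / 4) := by
    rw [integral_eq_lintegral_of_nonneg_ae (Eventually.of_forall fun z => abs_nonneg _)
      (by fun_prop)]
    exact ENNReal.toReal_le_of_le_ofReal (by positivity) hbound
  have hnn : 0 ≤ ∫ z in Ioo (0 : ℝ) t ×ˢ S y, |u z - r| :=
    integral_nonneg fun z => abs_nonneg _
  rw [Real.dist_eq, sub_zero, abs_of_nonneg (by positivity)]
  calc _ ≤ 1 / y * (y * (3 * η / 4)) := by gcongr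
    _ = 3 * η / 4 := by field_simp
    _ < η := by linarith

/-- under Condition (V1) and the energy estimate, the macroscopic
density near the boundary is prescribed by the reservoir profile:
`(1/y) ∫₀ᵗ ∫₀^y |u(s,x) − ρ(0)| dx ds → 0` as `y → 0+`, and similarly at the
right boundary. -/
theorem boundary_density_prescribed (V ρ : ℝ → ℝ)
    (hVmeas : Measurable V) (hVpos : ∀ x ∈ Ioo (0 : ℝ) 1, 0 < V x)
    (hV1 : CondV1 V)
    (hρcont : ContinuousOn ρ (Icc 0 1)) (hρmem : ∀ x ∈ Icc (0 : ℝ) 1, ρ x ∈ Ioo (0 : ℝ) 1)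
    (u : ℝ × ℝ → ℝ) (humeas : Measurable u) (humem : ∀ z : ℝ × ℝ, u z ∈ Icc (0 : ℝ) 1)
    (henergy : ∀ T > 0, (∫⁻ z in Ioo (0 : ℝ) T ×ˢ Ioo (0 : ℝ) 1,
      ENNReal.ofReal (V z.2 * (u z - ρ z.2) ^ 2)) < ⊤) :
    ∀ t > 0,
      Tendsto (fun y : ℝ =>
          (1 / y) * ∫ z in Ioo (0 : ℝ) t ×ˢ Ioo (0 : ℝ) y, |u z - ρ 0|)
        (𝓝[>] (0 : ℝ)) (𝓝 0) ∧
      Tendsto (fun y : ℝ =>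
          (1 / y) * ∫ z in Ioo (0 : ℝ) t ×ˢ Ioo (1 - y) (1 : ℝ), |u z - ρ 1|)
        (𝓝[>] (0 : ℝ)) (𝓝 0) := by
  intro t ht
  obtain ⟨K, hK0, hK⟩ : ∃ K : ℝ, 0 ≤ K ∧ ∀ᶠ y in 𝓝[>] (0 : ℝ),
      ∫⁻ x in Ioo (0 : ℝ) y, ENNReal.ofReal (1 / V x + 1 / V (1 - x))
        ≤ ENNReal.ofReal (y ^ 2 * K) := by
    obtain ⟨k, hk1, hk2⟩ := exists_between hV1
    refine ⟨k.toReal, ENNReal.toReal_nonneg, ?_⟩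
    filter_upwards [eventually_lt_of_limsup_lt hk1, self_mem_nhdsWithin] with y hy hy0
    have hy0 : 0 < y := hy0
    rw [ENNReal.ofReal_mul (by positivity), ENNReal.ofReal_toReal hk2.ne]
    calc _ = ENNReal.ofReal (y ^ 2) * (ENNReal.ofReal (1 / y ^ 2) *
          ∫⁻ x in Ioo (0 : ℝ) y, ENNReal.ofReal (1 / V x + 1 / V (1 - x))) := by
          rw [← mul_assoc, ← ENNReal.ofReal_mul (by positivity), mul_one_div_cancel (by positivity)]
          simp
      _ ≤ _ := by gcongr
  have hy01 : ∀ᶠ y in 𝓝[>] (0 : ℝ), y ∈ Ioo (0 : ℝ) 1 := Ioo_mem_nhdsGT one_pos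
  constructor
  · refine bdp_core V ρ hVmeas hVpos u t ht (henergy t ht) humeas (fun y => Ioo 0 y)
      (fun y => measurableSet_Ioo) (fun y hy => Ioo_subset_Ioo le_rfl hy.2.le) (by simp) (ρ 0)
      ?_ K hK0 ?_
    · intro ε hε
      obtain ⟨δ, hδ, h⟩ := Metric.continuousOn_iff.1 hρcont 0 (by simp) ε hε
      filter_upwards [hy01, Ioo_mem_nhdsGT hδ] with y hy hyδ x hx
      have := h x ⟨hx.1.le, (hx.2.trans hy.2).le⟩
        (by rw [Real.dist_eq, sub_zero, abs_of_pos hx.1]; exact hx.2.trans hyδ.2)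
      rw [Real.dist_eq] at this
      exact this.le
    · filter_upwards [hK, hy01] with y h hy
      refine le_trans (setLIntegral_mono' measurableSet_Ioo fun x hx => ?_) h
      apply ENNReal.ofReal_le_ofReal
      have := hVpos (1 - x) ⟨by linarith [hx.2, hy.2], by linarith [hx.1]⟩
      have : 0 < 1 / V (1 - x) := by positivity
      linarith
  · refine bdp_core V ρ hVmeas hVpos u t ht (henergy t ht) humeas (fun y => Ioo (1 - y) 1)
      (fun y => measurableSet_Ioo) (fun y hy => Ioo_subset_Ioo (by linarith [hy.2]) le_rfl)
      (by simp) (ρ 1) ?_ K hK0 ?_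
    · intro ε hε
      obtain ⟨δ, hδ, h⟩ := Metric.continuousOn_iff.1 hρcont 1 (by simp) ε hε
      filter_upwards [hy01, Ioo_mem_nhdsGT hδ] with y hy hyδ x hx
      have := h x ⟨by linarith [hx.1, hy.2], hx.2.le⟩
        (by rw [Real.dist_eq, abs_lt]; constructor <;> linarith [hx.1, hx.2, hyδ.2])
      rw [Real.dist_eq] at this
      exact this.le
    · filter_upwards [hK, hy01] with y h hy
      have hmp : MeasurePreserving (fun x : ℝ => 1 - x) volume volume :=
        Measure.measurePreserving_sub_left volume 1
      have hpre : (fun x : ℝ => 1 - x) ⁻¹' Ioo (1 - y) 1 = Ioo 0 y := by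
        simp
      have hVm : Measurable fun x => ENNReal.ofReal (1 / V x) := by fun_prop
      rw [← hmp.setLIntegral_comp_preimage measurableSet_Ioo hVm, hpre]
      refine le_trans (setLIntegral_mono' measurableSet_Ioo fun x hx => ?_) h
      apply ENNReal.ofReal_le_ofReal
      have := hVpos x ⟨hx.1, hx.2.trans hy.2⟩
      have : 0 < 1 / V x := by positivity
      linarith
end

section
/- Fix γ ≥ 1 and ρ₀, ρ₁ ∈ (0,1). Define V(x) = x^{−γ} + (1−x)^{−γ} and ρ(x) = (ρ₀(1−x)^γ + ρ₁ x^γ)/((1−x)^γ + x^γ) for x ∈ (0,1), with ρ(0) = ρ₀ and ρ(1) = ρ₁. Then V satisfies Condition (V1), i.e. limsup_{y→0+} y⁻² ∫₀^y [1/V(x) + 1/V(1−x)] dx < ∞, and the pair (V,ρ) satisfies Condition (V2), i.e. lim_{y→0+} [ ∫₀^y V(x)(ρ(x)−ρ₀)² dx + ∫_{1−y}^1 V(x)(ρ(x)−ρ₁)² dx ] = 0. -/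
open MeasureTheory Set Filter Topology

theorem aux_bound (a b c r s : ℝ) (ha : 0 < a) (hb : 0 < b) (hc : 0 < c) (hcb : c ≤ b)
    (hr : r ∈ Ioo (0 : ℝ) 1) (hs : s ∈ Ioo (0 : ℝ) 1) :
    (a⁻¹ + b⁻¹) * ((r * b + s * a) / (b + a) - r) ^ 2 ≤ c⁻¹ := by
  have e : (a⁻¹ + b⁻¹) * ((r * b + s * a) / (b + a) - r) ^ 2
      = ((s - r) ^ 2 * (a / (b + a))) * b⁻¹ := by
    have : b + a ≠ 0 := by positivity
    field_simp
    ring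
  rw [e]
  have h1 : (s - r) ^ 2 ≤ 1 := by
    obtain ⟨h1, h2⟩ := hr
    obtain ⟨h3, h4⟩ := hs
    rw [sq_le_one_iff_abs_le_one, abs_le]
    constructor <;> linarith
  have h2 : a / (b + a) ≤ 1 := by
    rw [div_le_one (by positivity)]; linarith
  have h3 : b⁻¹ ≤ c⁻¹ := inv_anti₀ hc hcb
  have h4 : (s - r) ^ 2 * (a / (b + a)) ≤ 1 :=
    mul_le_one₀ h1 (by positivity) h2
  calc _ ≤ 1 * b⁻¹ := mul_le_mul_of_nonneg_right h4 (by positivity)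
    _ ≤ c⁻¹ := by rw [one_mul]; exact h3

theorem aux_int (f : ℝ → ℝ) (a b C : ℝ) (h : ∀ x ∈ Ioo a b, f x ≤ C) :
    ∫⁻ x in Ioo a b, ENNReal.ofReal (f x) ≤ ENNReal.ofReal C * ENNReal.ofReal (b - a) := by
  calc ∫⁻ x in Ioo a b, ENNReal.ofReal (f x)
      ≤ ∫⁻ x in Ioo a b, ENNReal.ofReal C :=
        setLIntegral_mono measurable_const (fun x hx => ENNReal.ofReal_le_ofReal (h x hx))
    _ = _ := by simp

theorem aux_inv (γ x y : ℝ) (hγ : 1 ≤ γ) (hx : 0 < x) (hx1 : x < 1) (hy : 0 ≤ y) :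
    1 / (x ^ (-γ) + y ^ (-γ)) ≤ x := by
  have h1 : x⁻¹ ≤ x ^ (-γ) := by
    rw [← Real.rpow_neg_one]
    exact Real.rpow_le_rpow_of_exponent_ge hx hx1.le (by linarith)
  have h2 : 0 ≤ y ^ (-γ) := Real.rpow_nonneg hy _
  calc _ ≤ 1 / x⁻¹ := one_div_le_one_div_of_le (by positivity) (by linarith)
    _ = x := by simp

/-- for `γ ≥ 1` and `ρ₀, ρ₁ ∈ (0,1)`, the profiles
`V(x) = x^{−γ} + (1−x)^{−γ}` and
`ρ(x) = (ρ₀(1−x)^γ + ρ₁ x^γ)/((1−x)^γ + x^γ)` satisfy Conditions (V1) and (V2)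
(with boundary values `ρ₀` and `ρ₁`). -/
theorem example_profile_satisfies_V1_V2 (γ : ℝ) (hγ : 1 ≤ γ)
    (ρ₀ ρ₁ : ℝ) (h0 : ρ₀ ∈ Ioo (0 : ℝ) 1) (h1 : ρ₁ ∈ Ioo (0 : ℝ) 1) :
    CondV1 (fun x : ℝ => x ^ (-γ) + (1 - x) ^ (-γ)) ∧
    Filter.Tendsto
      (fun y : ℝ =>
        (∫⁻ x in Ioo (0 : ℝ) y,
          ENNReal.ofReal ((x ^ (-γ) + (1 - x) ^ (-γ)) *
            ((ρ₀ * (1 - x) ^ γ + ρ₁ * x ^ γ) / ((1 - x) ^ γ + x ^ γ) - ρ₀) ^ 2)) +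
        ∫⁻ x in Ioo (1 - y) (1 : ℝ),
          ENNReal.ofReal ((x ^ (-γ) + (1 - x) ^ (-γ)) *
            ((ρ₀ * (1 - x) ^ γ + ρ₁ * x ^ γ) / ((1 - x) ^ γ + x ^ γ) - ρ₁) ^ 2))
      (𝓝[>] (0 : ℝ)) (𝓝 0) := by
  have hev : ∀ᶠ y : ℝ in 𝓝[>] (0 : ℝ), y ∈ Ioo (0 : ℝ) (1 / 2) :=
    Ioo_mem_nhdsGT (by norm_num)
  constructor
  · unfold CondV1
    refine lt_of_le_of_lt (limsup_le_of_le (a := 2) (by isBoundedDefault) ?_)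
      (by exact ENNReal.ofNat_lt_top)
    filter_upwards [hev] with y hy
    obtain ⟨hy0, hy2⟩ := hy
    have hb := aux_int (fun x => 1 / (x ^ (-γ) + (1 - x) ^ (-γ)) +
      1 / ((1 - x) ^ (-γ) + (1 - (1 - x)) ^ (-γ))) 0 y (2 * y) (by
        rintro x ⟨hx0, hxy⟩
        have h := aux_inv γ x (1 - x) hγ hx0 (by linarith) (by linarith)
        have e : (1 - (1 - x)) = x := by ring
        simp only [e]
        rw [add_comm ((1 - x) ^ (-γ)) (x ^ (-γ))]
        linarith)
    refine (mul_le_mul_right hb _).trans ?_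
    rw [← ENNReal.ofReal_mul (by positivity), ← ENNReal.ofReal_mul (by positivity)]
    have : 1 / y ^ 2 * (2 * y * (y - 0)) = 2 := by field_simp; ring
    rw [this]
    simp
  · have key : Tendsto (fun y : ℝ => ENNReal.ofReal ((((1 / 2 : ℝ) ^ γ)⁻¹ * y) +
        (((1 / 2 : ℝ) ^ γ)⁻¹ * y))) (𝓝[>] (0 : ℝ)) (𝓝 0) := by
      have : Continuous (fun y : ℝ => ENNReal.ofReal ((((1 / 2 : ℝ) ^ γ)⁻¹ * y) +
        (((1 / 2 : ℝ) ^ γ)⁻¹ * y))) := ENNReal.continuous_ofReal.comp (by fun_prop)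
      have h := (this.tendsto 0).mono_left (nhdsWithin_le_nhds (s := Ioi 0))
      simpa using h
    refine tendsto_of_tendsto_of_tendsto_of_le_of_le' tendsto_const_nhds key
      (Eventually.of_forall fun y => zero_le) ?_
    filter_upwards [hev] with y hy
    obtain ⟨hy0, hy2⟩ := hy
    have hc : 0 < (1 / 2 : ℝ) ^ γ := by positivity
    rw [ENNReal.ofReal_add (by positivity) (by positivity), ENNReal.ofReal_mul (by positivity)]
    refine add_le_add ((aux_int _ 0 y ((1 / 2 : ℝ) ^ γ)⁻¹ ?_).trans_eq (by simp))
      ((aux_int _ (1 - y) 1 ((1 / 2 : ℝ) ^ γ)⁻¹ ?_).trans_eq (by simp))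
    · rintro x ⟨hx0, hxy⟩
      have hx1 : 0 < 1 - x := by linarith
      rw [Real.rpow_neg hx0.le, Real.rpow_neg hx1.le]
      exact aux_bound (x ^ γ) ((1 - x) ^ γ) _ ρ₀ ρ₁ (by positivity) (by positivity) hc
        (Real.rpow_le_rpow (by norm_num) (by linarith) (by linarith)) h0 h1
    · rintro x ⟨hx0, hxy⟩
      have hx : 0 < x := by linarith
      have hx1 : 0 < 1 - x := by linarith
      rw [Real.rpow_neg hx.le, Real.rpow_neg hx1.le]
      have := aux_bound ((1 - x) ^ γ) (x ^ γ) _ ρ₁ ρ₀ (by positivity) (by positivity) hc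
        (Real.rpow_le_rpow (by norm_num) (by linarith) (by linarith)) h1 h0
      rw [add_comm (x ^ γ)⁻¹, add_comm (ρ₀ * (1 - x) ^ γ), add_comm ((1 - x) ^ γ) (x ^ γ)]
      exact this
end

section
/- Let N ≥ 1, p ∈ (1/2,1], σ ≥ 0, let ν = ν_{1/2}^N be the uniform measure on Ω_N, and let f : Ω_N → (0,∞) be a probability density with respect to ν (Σ_η f(η)ν(η) = 1), with μ = fν. Then ⟨f, L_exc[log f]⟩_ν ≤ −(σ+1) D_exc^N(μ;ν) + (2p−1). -/
open Finset

/-- The space of particle configurations on `{0,1,…,N}`. -/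
abbrev Cfg (N : ℕ) := Fin (N + 1) → Bool

/-- The real value (`0` or `1`) of an occupation variable. -/
def ind (b : Bool) : ℝ := if b then 1 else 0

/-- The configuration obtained by swapping the values at sites `i` and `i+1`. -/
def swap {N : ℕ} (i : Fin N) (η : Cfg N) : Cfg N :=
  fun k => if k = i.castSucc then η i.succ else if k = i.succ then η i.castSucc else η k

/-- The exclusion jump rate `c_{i,i+1}(η) = p η_i(1−η_{i+1}) + (1−p) η_{i+1}(1−η_i)`. -/
noncomputable def cExc (p : ℝ) {N : ℕ} (i : Fin N) (η : Cfg N) : ℝ :=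
  p * ind (η i.castSucc) * (1 - ind (η i.succ)) +
    (1 - p) * ind (η i.succ) * (1 - ind (η i.castSucc))

/-- The exclusion generator
`L_exc g(η) = Σ_{i=0}^{N−1} (c_{i,i+1}(η) + σ/2)[g(η^{i,i+1}) − g(η)]`. -/
noncomputable def Lexc (p σ : ℝ) {N : ℕ} (g : Cfg N → ℝ) (η : Cfg N) : ℝ :=
  ∑ i : Fin N, (cExc p i η + σ / 2) * (g (swap i η) - g η)

/-- The uniform (product Bernoulli(1/2)) probability measure on `Cfg N`. -/
noncomputable def nuHalf (N : ℕ) (_η : Cfg N) : ℝ := (1 / 2) ^ (N + 1)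

/-- The exclusion Dirichlet form
`D_exc^N(μ;ν) = (1/2) Σ_η Σ_{i=0}^{N−1} (√(f(η^{i,i+1})) − √(f(η)))² ν(η)`,
where `f = dμ/dν`. -/
noncomputable def Dexc (N : ℕ) (f ν : Cfg N → ℝ) : ℝ :=
  (1 / 2) * ∑ η : Cfg N, ∑ i : Fin N,
    (Real.sqrt (f (swap i η)) - Real.sqrt (f η)) ^ 2 * ν η

lemma swap_swap' {N : ℕ} (i : Fin N) (η : Cfg N) : swap i (swap i η) = η := by
  have h : i.succ ≠ i.castSucc := (Fin.castSucc_lt_succ (i := i)).ne'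
  funext k
  unfold swap
  by_cases h1 : k = i.castSucc
  · subst h1; simp [h]
  · by_cases h2 : k = i.succ
    · subst h2; simp [h]
    · simp [h1, h2]

lemma sum_swap {N : ℕ} (i : Fin N) (F : Cfg N → ℝ) :
    ∑ η, F (swap i η) = ∑ η, F η :=
  Function.Bijective.sum_comp (Function.Involutive.bijective (swap_swap' i)) F

lemma log_bound {a b : ℝ} (ha : 0 < a) (hb : 0 < b) :
    a * (Real.log b - Real.log a) ≤ -(√b - √a) ^ 2 + b - a := by
  have sa := Real.sqrt_pos.2 ha
  have sb := Real.sqrt_pos.2 hb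
  have ea := Real.sq_sqrt ha.le
  have eb := Real.sq_sqrt hb.le
  have h := Real.log_le_sub_one_of_pos (div_pos sb sa)
  rw [Real.log_div sb.ne' sa.ne', Real.log_sqrt hb.le, Real.log_sqrt ha.le] at h
  have h2 := mul_le_mul_of_nonneg_left h ha.le
  have h3 : a * (√b / √a - 1) = √a * √b - a := by
    nth_rewrite 1 [← ea]
    field_simp
    linear_combination -ea
  nlinarith

lemma bond_identity {N : ℕ} (p σ : ℝ) (f : Cfg N → ℝ) (i : Fin N) :
    ∑ η, (cExc p i η + σ / 2) * (-(√(f (swap i η)) - √(f η)) ^ 2 + f (swap i η) - f η)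
    = ∑ η, (-((σ + 1) / 2) * (√(f (swap i η)) - √(f η)) ^ 2
        + f η * ((1 - 2 * p) * (ind (η i.castSucc) - ind (η i.succ)))) := by
  set G : Cfg N → ℝ := fun η =>
    (cExc p i η + σ / 2) * (-(√(f (swap i η)) - √(f η)) ^ 2 + f (swap i η) - f η) with hG
  set H : Cfg N → ℝ := fun η => (-((σ + 1) / 2) * (√(f (swap i η)) - √(f η)) ^ 2
        + f η * ((1 - 2 * p) * (ind (η i.castSucc) - ind (η i.succ)))) with hH
  have key : ∀ η, G η + G (swap i η) = H η + H (swap i η) := by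
    intro η
    have h : i.succ ≠ i.castSucc := (Fin.castSucc_lt_succ (i := i)).ne'
    have e1 : (swap i η) i.castSucc = η i.succ := by simp [swap]
    have e2 : (swap i η) i.succ = η i.castSucc := by simp [swap, h]
    by_cases hq : η i.castSucc = η i.succ
    · have e : swap i η = η := by
        funext k
        unfold swap
        split_ifs with h1 h2
        · rw [h1, hq]
        · rw [h2, hq]
        · rfl
      simp only [hG, hH, e, hq]
      ring
    · simp only [hG, hH, swap_swap', cExc, e1, e2]
      cases h1 : η i.castSucc <;> cases h2 : η i.succ <;> simp_all [ind] <;> ring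
  have hs : ∑ η, (G η + G (swap i η)) = ∑ η, (H η + H (swap i η)) :=
    Finset.sum_congr rfl fun η _ => key η
  rw [Finset.sum_add_distrib, Finset.sum_add_distrib, sum_swap, sum_swap] at hs
  linarith

lemma cExc_nonneg {N : ℕ} {p : ℝ} (h0 : 0 ≤ p) (h1 : p ≤ 1) (i : Fin N) (η : Cfg N) :
    0 ≤ cExc p i η := by
  unfold cExc ind
  split_ifs <;> simp <;> linarith

lemma telescope {N : ℕ} (g : Fin (N + 1) → ℝ) :
    ∑ i : Fin N, (g i.castSucc - g i.succ) = g 0 - g (Fin.last N) := by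
  have h1 := Fin.sum_univ_succ g
  have h2 := Fin.sum_univ_castSucc g
  rw [Finset.sum_sub_distrib]
  linarith

/-- `⟨f, L_exc[log f]⟩_ν ≤ −(σ+1) D_exc^N(μ;ν) + (2p−1)` for the
uniform reference measure `ν = ν_{1/2}^N`. -/
theorem exclusion_entropy_production_bound (N : ℕ) (hN : 1 ≤ N)
    (p : ℝ) (hp : p ∈ Set.Ioc (1 / 2 : ℝ) 1) (σ : ℝ) (hσ : 0 ≤ σ)
    (f : Cfg N → ℝ) (hf : ∀ η, 0 < f η)
    (hf1 : ∑ η : Cfg N, f η * nuHalf N η = 1) :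
    ∑ η : Cfg N, f η * Lexc p σ (fun ζ => Real.log (f ζ)) η * nuHalf N η
      ≤ -(σ + 1) * Dexc N f (nuHalf N) + (2 * p - 1) := by
  obtain ⟨hp1, hp2⟩ := hp
  have hc : (0 : ℝ) < (1 / 2) ^ (N + 1) := by positivity
  simp only [Dexc, Lexc]
  simp only [nuHalf] at hf1 ⊢
  rw [← Finset.sum_mul] at hf1 ⊢
  simp only [← Finset.sum_mul]
  generalize ((1 / 2 : ℝ) ^ (N + 1)) = c at *
  have main : ∑ η : Cfg N, f η * ∑ i : Fin N, (cExc p i η + σ / 2) *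
      (Real.log (f (swap i η)) - Real.log (f η)) ≤
      -((σ + 1) / 2) * ∑ η : Cfg N, ∑ i : Fin N, (√(f (swap i η)) - √(f η)) ^ 2
        + (2 * p - 1) * ∑ η, f η := by
    calc _ ≤ ∑ η : Cfg N, ∑ i : Fin N, (cExc p i η + σ / 2) *
          (-(√(f (swap i η)) - √(f η)) ^ 2 + f (swap i η) - f η) := by
          refine Finset.sum_le_sum fun η _ => ?_
          rw [Finset.mul_sum]
          refine Finset.sum_le_sum fun i _ => ?_
          have h := log_bound (hf η) (hf (swap i η))
          have hn := cExc_nonneg (p := p) (by linarith) hp2 i η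
          have := mul_le_mul_of_nonneg_left h (by linarith : 0 ≤ cExc p i η + σ / 2)
          linarith
      _ = ∑ η : Cfg N, ∑ i : Fin N, (-((σ + 1) / 2) * (√(f (swap i η)) - √(f η)) ^ 2
        + f η * ((1 - 2 * p) * (ind (η i.castSucc) - ind (η i.succ)))) := by
          rw [Finset.sum_comm, Finset.sum_congr rfl fun i _ => bond_identity p σ f i,
            Finset.sum_comm]
      _ ≤ _ := by
          rw [Finset.mul_sum, Finset.mul_sum, ← Finset.sum_add_distrib]
          refine Finset.sum_le_sum fun η _ => ?_
          rw [Finset.sum_add_distrib, ← Finset.mul_sum, ← Finset.mul_sum, ← Finset.mul_sum,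
            telescope (fun k => ind (η k))]
          have hb : -1 ≤ ind (η 0) - ind (η (Fin.last N)) := by
            unfold ind
            split_ifs <;> norm_num
          have h3 := mul_le_mul_of_nonneg_left hb
            (mul_nonneg (hf η).le (by linarith : 0 ≤ 2 * p - 1))
          linarith
  have := mul_le_mul_of_nonneg_right main hc.le
  refine this.trans (le_of_eq ?_)
  linear_combination (2 * p - 1) * hf1
end

section
/- Let N ≥ 1, let c_in^−, c_out^−, c_in^+, c_out^+ ≥ 0, let ν = ν_{1/2}^N be the uniform measure on Ω_N, and let f : Ω_N → (0,∞) be a probability density with respect to ν, with μ = fν. Then ⟨f, L_bd[log f]⟩_ν ≤ −2[D_−^N(μ;ν) + D_+^N(μ;ν)] + |c_out^− − c_in^−| + |c_out^+ − c_in^+|. -/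
open Finset

/-- The configuration obtained by flipping the value at site `i`. -/
def flipCfg {N : ℕ} (i : Fin (N + 1)) (η : Cfg N) : Cfg N :=
  Function.update η i (!(η i))

/-- The left boundary rate `c_0(η) = c_in^−(1−η_0) + c_out^− η_0`. -/
noncomputable def cLeft {N : ℕ} (cin cout : ℝ) (η : Cfg N) : ℝ :=
  cin * (1 - ind (η 0)) + cout * ind (η 0)

/-- The right boundary rate `c_N(η) = c_in^+(1−η_N) + c_out^+ η_N`. -/
noncomputable def cRight {N : ℕ} (cin cout : ℝ) (η : Cfg N) : ℝ :=
  cin * (1 - ind (η (Fin.last N))) + cout * ind (η (Fin.last N))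

/-- The boundary generator
`L_bd g(η) = c_0(η)[g(η^0) − g(η)] + c_N(η)[g(η^N) − g(η)]`. -/
noncomputable def Lbd {N : ℕ} (cinL coutL cinR coutR : ℝ) (g : Cfg N → ℝ) (η : Cfg N) : ℝ :=
  cLeft cinL coutL η * (g (flipCfg 0 η) - g η) +
    cRight cinR coutR η * (g (flipCfg (Fin.last N) η) - g η)

/-- The left boundary Dirichlet form
`D_−^N(μ;ν) = (1/2) Σ_η c_0(η)(√(f(η^0)) − √(f(η)))² ν(η)`. -/
noncomputable def Dminus (N : ℕ) (cin cout : ℝ) (f ν : Cfg N → ℝ) : ℝ :=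
  (1 / 2) * ∑ η : Cfg N,
    cLeft cin cout η * (Real.sqrt (f (flipCfg 0 η)) - Real.sqrt (f η)) ^ 2 * ν η

/-- The right boundary Dirichlet form
`D_+^N(μ;ν) = (1/2) Σ_η c_N(η)(√(f(η^N)) − √(f(η)))² ν(η)`. -/
noncomputable def Dplus (N : ℕ) (cin cout : ℝ) (f ν : Cfg N → ℝ) : ℝ :=
  (1 / 2) * ∑ η : Cfg N,
    cRight cin cout η * (Real.sqrt (f (flipCfg (Fin.last N) η)) - Real.sqrt (f η)) ^ 2 * ν η

theorem flip_flip_aux {N : ℕ} (i : Fin (N + 1)) : Function.Involutive (flipCfg (N := N) i) := by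
  intro η
  simp [flipCfg]

theorem log_aux (a b : ℝ) (ha : 0 < a) (hb : 0 < b) :
    a * (Real.log b - Real.log a) ≤ -(Real.sqrt b - Real.sqrt a) ^ 2 + (b - a) := by
  obtain ⟨x, hx, rfl⟩ : ∃ x, 0 < x ∧ a = x ^ 2 :=
    ⟨Real.sqrt a, Real.sqrt_pos.2 ha, (Real.sq_sqrt ha.le).symm⟩
  obtain ⟨y, hy, rfl⟩ : ∃ x, 0 < x ∧ b = x ^ 2 :=
    ⟨Real.sqrt b, Real.sqrt_pos.2 hb, (Real.sq_sqrt hb.le).symm⟩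
  rw [Real.sqrt_sq hx.le, Real.sqrt_sq hy.le, Real.log_pow, Real.log_pow]
  have h := Real.log_le_sub_one_of_pos (div_pos hy hx)
  rw [Real.log_div hy.ne' hx.ne'] at h
  have h2 := mul_le_mul_of_nonneg_left h (sq_nonneg x)
  have h3 : x ^ 2 * (y / x - 1) = x * y - x ^ 2 := by
    field_simp
  push_cast
  nlinarith

theorem site_aux (N : ℕ) (i : Fin (N + 1)) (cin cout : ℝ) (h1 : 0 ≤ cin) (h2 : 0 ≤ cout)
    (c : Cfg N → ℝ) (hc : ∀ η, c η = cin * (1 - ind (η i)) + cout * ind (η i))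
    (f : Cfg N → ℝ) (hf : ∀ η, 0 < f η)
    (hf1 : ∑ η : Cfg N, f η * nuHalf N η = 1) :
    ∑ η : Cfg N, f η * (c η * (Real.log (f (flipCfg i η)) - Real.log (f η))) * nuHalf N η
      ≤ -(∑ η : Cfg N, c η * (Real.sqrt (f (flipCfg i η)) - Real.sqrt (f η)) ^ 2 * nuHalf N η)
        + |cout - cin| := by
  have hν : ∀ η, 0 ≤ nuHalf N η := fun η => by unfold nuHalf; positivity
  have hc0 : ∀ η, 0 ≤ c η := fun η => by
    rw [hc]; cases η i <;> simp [ind, h1, h2]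
  have key : ∑ η : Cfg N, c η * f (flipCfg i η) * nuHalf N η
      = ∑ η : Cfg N, c (flipCfg i η) * f η * nuHalf N η := by
    apply Fintype.sum_equiv (flip_flip_aux i).toPerm
    intro η
    simp [flip_flip_aux i η, nuHalf]
  have hA : ∑ η : Cfg N, f η * (c η * (Real.log (f (flipCfg i η)) - Real.log (f η))) * nuHalf N η
      ≤ ∑ η : Cfg N, (-(c η * (Real.sqrt (f (flipCfg i η)) - Real.sqrt (f η)) ^ 2 * nuHalf N η)
        + (c η * f (flipCfg i η) * nuHalf N η - c η * f η * nuHalf N η)) := by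
    apply Finset.sum_le_sum
    intro η _
    have h := mul_le_mul_of_nonneg_left (log_aux (f η) (f (flipCfg i η)) (hf _) (hf _))
      (mul_nonneg (hc0 η) (hν η))
    linarith
  have hB : ∑ η : Cfg N, (c (flipCfg i η) * f η * nuHalf N η - c η * f η * nuHalf N η)
      ≤ ∑ η : Cfg N, |cout - cin| * (f η * nuHalf N η) := by
    apply Finset.sum_le_sum
    intro η _
    have h : c (flipCfg i η) - c η ≤ |cout - cin| := by
      rw [hc, hc]
      have e1 := le_abs_self (cout - cin)
      have e2 := neg_abs_le (cout - cin)
      cases h : η i <;> simp [flipCfg, ind, h] <;> linarith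
    have := mul_le_mul_of_nonneg_right h (mul_nonneg (hf η).le (hν η))
    linarith
  rw [← Finset.mul_sum, hf1, Finset.sum_sub_distrib] at hB
  rw [Finset.sum_add_distrib, Finset.sum_neg_distrib, Finset.sum_sub_distrib, key] at hA
  linarith

/-- `⟨f, L_bd[log f]⟩_ν ≤ −2[D_−^N(μ;ν) + D_+^N(μ;ν)] + |c_out^− − c_in^−| + |c_out^+ − c_in^+|`. -/
theorem boundary_entropy_production_bound (N : ℕ) (hN : 1 ≤ N)
    (cinL coutL cinR coutR : ℝ)
    (h1 : 0 ≤ cinL) (h2 : 0 ≤ coutL) (h3 : 0 ≤ cinR) (h4 : 0 ≤ coutR)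
    (f : Cfg N → ℝ) (hf : ∀ η, 0 < f η)
    (hf1 : ∑ η : Cfg N, f η * nuHalf N η = 1) :
    ∑ η : Cfg N, f η * Lbd cinL coutL cinR coutR (fun ζ => Real.log (f ζ)) η * nuHalf N η
      ≤ -2 * (Dminus N cinL coutL f (nuHalf N) + Dplus N cinR coutR f (nuHalf N))
        + |coutL - cinL| + |coutR - cinR| := by
  have hL := site_aux N 0 cinL coutL h1 h2 (cLeft cinL coutL) (fun _ => rfl) f hf hf1
  have hR := site_aux N (Fin.last N) cinR coutR h3 h4 (cRight cinR coutR) (fun _ => rfl) f hf hf1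
  unfold Dminus Dplus
  simp only [Lbd, mul_add, add_mul, Finset.sum_add_distrib]
  linarith
end

section
/- Let V ∈ C¹((0,1);ℝ) with inf_{x∈(0,1)} V(x) > 0, and let K : ℕ → ℕ satisfy K(N) ≥ 1 and K(N)/N → 0 as N → ∞. For each N define n(N) = min{ n ∈ ℕ : n ≥ K(N) and sup{ |V'(x)| : x ∈ [(n−K(N))/N, 1−(n−K(N))/N] } ≤ N/K(N) } (with the supremum over the empty set taken to be 0, so n(N) is well defined). Then: (i) n(N)/N → 0 as N → ∞; (ii) there exists a constant C = C(V) such that for all sufficiently large N, for all integers i with n(N) ≤ i ≤ N−n(N) and all integers j with |j| < K(N), ∫_{i/N − 1/(2N)}^{i/N + 1/(2N)} V(x) dx ≤ (C/N) · V((i+j)/N). -/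
open MeasureTheory Set Filter Topology

/-- `n(N)`: the smallest `n ≥ K(N)` such that
`sup{ |V'(x)| : x ∈ [(n−K(N))/N, 1−(n−K(N))/N] } ≤ N/K(N)`
(the supremum over the empty set being `0`). -/
noncomputable def nIdx (V : ℝ → ℝ) (K : ℕ → ℕ) (N : ℕ) : ℕ :=
  sInf {n : ℕ | K N ≤ n ∧
    (⨆ x ∈ Set.Icc (((n : ℝ) - K N) / N) (1 - ((n : ℝ) - K N) / N),
        ENNReal.ofReal |deriv V x|)
      ≤ ENNReal.ofReal ((N : ℝ) / K N)}

lemma nIdx_le_aux (V : ℝ → ℝ) (K : ℕ → ℕ) (N n : ℕ) (h1 : K N ≤ n)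
    (h2 : ∀ x ∈ Set.Icc (((n : ℝ) - K N) / N) (1 - ((n : ℝ) - K N) / N),
      |deriv V x| ≤ (N : ℝ) / K N) : nIdx V K N ≤ n := by
  unfold nIdx
  apply Nat.sInf_le
  refine ⟨h1, ?_⟩
  exact iSup₂_le fun x hx => ENNReal.ofReal_le_ofReal (h2 x hx)

lemma nIdx_spec_aux (V : ℝ → ℝ) (K : ℕ → ℕ) (N : ℕ) (hN : 0 < N) :
    K N ≤ nIdx V K N ∧ 
    ∀ x ∈ Set.Icc (((nIdx V K N : ℝ) - K N) / N) (1 - ((nIdx V K N : ℝ) - K N) / N),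
      |deriv V x| ≤ (N : ℝ) / K N := by
  have hne : {n : ℕ | K N ≤ n ∧
    (⨆ x ∈ Set.Icc (((n : ℝ) - K N) / N) (1 - ((n : ℝ) - K N) / N),
        ENNReal.ofReal |deriv V x|)
      ≤ ENNReal.ofReal ((N : ℝ) / K N)}.Nonempty := by
    refine ⟨K N + (N + 1), Nat.le_add_right _ _, ?_⟩
    refine iSup₂_le fun x hx => ?_
    exfalso
    have hN' : (0 : ℝ) < N := by exact_mod_cast hN
    have h1 := hx.1.trans hx.2
    have h2 : (((K N + (N + 1) : ℕ) : ℝ) - K N) / N = 1 + 1 / N := by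
      push_cast
      field_simp
      ring
    rw [h2] at h1
    have : 0 < 1 / (N : ℝ) := by positivity
    linarith
  have h := Nat.sInf_mem hne
  refine ⟨h.1, fun x hx => ?_⟩
  have h3 := (iSup₂_le_iff.1 h.2) x hx
  exact (ENNReal.ofReal_le_ofReal_iff (by positivity)).1 h3

/-- `n(N) = o(N)`, and there is a constant `C = C(V)` such that
for all sufficiently large `N`, all `n(N) ≤ i ≤ N − n(N)` and all `|j| < K(N)`,
`∫_{i/N − 1/(2N)}^{i/N + 1/(2N)} V(x) dx ≤ (C/N) · V((i+j)/N)`. -/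
theorem mesoscopic_V_comparison (V : ℝ → ℝ)
    (hV : ContDiffOn ℝ 1 V (Set.Ioo 0 1))
    (hVinf : ∃ c > 0, ∀ x ∈ Set.Ioo (0 : ℝ) 1, c ≤ V x)
    (K : ℕ → ℕ) (hK1 : ∀ N, 1 ≤ K N)
    (hKo : Filter.Tendsto (fun N : ℕ => (K N : ℝ) / N) Filter.atTop (𝓝 0)) :
    Filter.Tendsto (fun N : ℕ => (nIdx V K N : ℝ) / N) Filter.atTop (𝓝 0) ∧
    ∃ C : ℝ, ∀ᶠ N : ℕ in Filter.atTop,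
      ∀ i : ℕ, nIdx V K N ≤ i → i + nIdx V K N ≤ N →
        ∀ j : ℤ, |j| < K N →
          (∫ x in Set.Icc ((i : ℝ) / N - 1 / (2 * N)) ((i : ℝ) / N + 1 / (2 * N)), V x)
            ≤ C / N * V (((i : ℝ) + j) / N) := by
  have hd : ∀ x ∈ Set.Ioo (0 : ℝ) 1, DifferentiableAt ℝ V x := fun x hx =>
    (hV.differentiableOn (by norm_num)).differentiableAt (isOpen_Ioo.mem_nhds hx)
  have hc : ContinuousOn (deriv V) (Set.Ioo 0 1) :=
    hV.continuousOn_deriv_of_isOpen isOpen_Ioo (by norm_num)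
  have hN0 : ∀ᶠ N : ℕ in atTop, 0 < N := eventually_gt_atTop 0
  constructor
  · rw [Metric.tendsto_atTop']
    suffices h : ∀ ε > 0, ∀ᶠ N : ℕ in atTop, (nIdx V K N : ℝ) / N < ε by
      intro ε hε
      obtain ⟨a, ha⟩ := eventually_atTop.1 (h ε hε)
      refine ⟨a, fun n hn => ?_⟩
      rw [Real.dist_eq, sub_zero, abs_of_nonneg (by positivity)]
      exact ha n hn.le
    intro ε hε
    obtain ⟨M, hM⟩ : ∃ M, ∀ x ∈ Set.Icc (ε / 4) (1 - ε / 4), ‖deriv V x‖ ≤ M :=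
      isCompact_Icc.exists_bound_of_continuousOn
        (hc.mono fun x hx => ⟨by linarith [hx.1], by linarith [hx.2]⟩)
    have e1 : ∀ᶠ N : ℕ in atTop, (K N : ℝ) / N < 1 / (|M| + 1) :=
      hKo.eventually_lt_const (by positivity)
    have e2 : ∀ᶠ N : ℕ in atTop, (K N : ℝ) / N < ε / 4 :=
      hKo.eventually_lt_const (by positivity)
    have e3 : ∀ᶠ N : ℕ in atTop, 1 / (N : ℝ) < ε / 4 :=
      tendsto_one_div_atTop_nhds_zero_nat.eventually_lt_const (by positivity)
    filter_upwards [e1, e2, e3, hN0] with N h1 h2 h3 hN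
    have hN' : (0 : ℝ) < N := by exact_mod_cast hN
    have hK : (0 : ℝ) < K N := by exact_mod_cast hK1 N
    have hle : nIdx V K N ≤ K N + ⌈ε / 4 * N⌉₊ := by
      apply nIdx_le_aux _ _ _ _ (Nat.le_add_right _ _)
      intro x hx
      have h4 : ε / 4 ≤ (((K N + ⌈ε / 4 * N⌉₊ : ℕ) : ℝ) - K N) / N := by
        rw [le_div_iff₀ hN']
        push_cast
        linarith [Nat.le_ceil (ε / 4 * N)]
      have h5 := hM x ⟨h4.trans hx.1, by linarith [hx.2]⟩
      rw [Real.norm_eq_abs] at h5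
      have h6 : |M| + 1 ≤ (N : ℝ) / K N := by
        rw [div_lt_div_iff₀ hN' (by positivity)] at h1
        rw [le_div_iff₀ hK]
        linarith
      linarith [le_abs_self M]
    have hle' : (nIdx V K N : ℝ) ≤ K N + ⌈ε / 4 * N⌉₊ := by exact_mod_cast hle
    have hce := Nat.ceil_lt_add_one (a := ε / 4 * N) (by positivity)
    rw [div_lt_iff₀ hN'] at h2 h3 ⊢
    nlinarith
  · obtain ⟨c, hc0, hcV⟩ := hVinf
    refine ⟨1 + 1 / c, ?_⟩
    filter_upwards [hN0] with N hN i hi1 hi2 j hj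
    have hN' : (0 : ℝ) < N := by exact_mod_cast hN
    have hK : (1 : ℝ) ≤ K N := by exact_mod_cast hK1 N
    obtain ⟨hs1, hs2⟩ := nIdx_spec_aux V K N hN
    set n := nIdx V K N
    have hs1' : (K N : ℝ) ≤ n := by exact_mod_cast hs1
    have hi1' : (n : ℝ) ≤ i := by exact_mod_cast hi1
    have hi2' : (i : ℝ) + n ≤ N := by exact_mod_cast hi2
    obtain ⟨hj1, hj2⟩ := abs_lt.1 hj
    have hj1' : -(K N : ℝ) + 1 ≤ j := by
      have : -(K N : ℤ) + 1 ≤ j := by omega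
      exact_mod_cast this
    have hj2' : (j : ℝ) + 1 ≤ K N := by
      have : j + 1 ≤ (K N : ℤ) := by omega
      exact_mod_cast this
    have hmem : ∀ t : ℝ, (n : ℝ) - K N ≤ t → 0 < t → t ≤ N - (n - K N) → t < N →
        t / N ∈ Set.Icc (((n : ℝ) - K N) / N) (1 - ((n : ℝ) - K N) / N) ∩ Set.Ioo 0 1 := by
      intro t h1 h2 h3 h4
      refine ⟨⟨by gcongr, ?_⟩, by positivity, by rwa [div_lt_one hN']⟩
      rw [← sub_nonneg]
      have : 1 - ((n : ℝ) - K N) / N - t / N = (N - (n - K N) - t) / N := by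
        field_simp
      rw [this]
      exact div_nonneg (by linarith) hN'.le
    have hy := hmem (i + j) (by linarith) (by linarith) (by linarith) (by linarith)
    have hconv : Convex ℝ
        (Set.Icc (((n : ℝ) - K N) / N) (1 - ((n : ℝ) - K N) / N) ∩ Set.Ioo 0 1) :=
      (convex_Icc _ _).inter (convex_Ioo _ _)
    have hVy := hcV _ hy.2
    have hbound : ∀ x ∈ Set.Icc ((i : ℝ) / N - 1 / (2 * N)) ((i : ℝ) / N + 1 / (2 * N)),
        ‖V x‖ ≤ (1 + 1 / c) * V (((i : ℝ) + j) / N) := by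
      intro x hx
      have ha : (i : ℝ) / N - 1 / (2 * N) = (i - 1 / 2) / N := by field_simp
      have hb : (i : ℝ) / N + 1 / (2 * N) = (i + 1 / 2) / N := by field_simp
      rw [ha, hb, Set.mem_Icc, div_le_iff₀ hN', le_div_iff₀ hN'] at hx
      obtain ⟨hx1, hx2⟩ := hx
      have hxm := hmem (x * N) (by linarith) (by linarith) (by linarith) (by linarith)
      have hxN : x * N / N = x := by field_simp
      rw [hxN] at hxm
      have hmv := hconv.norm_image_sub_le_of_norm_deriv_le (f := V) (C := (N : ℝ) / K N)
        (fun z hz => hd z hz.2) (fun z hz => hs2 z hz.1) hy hxm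
      have hdist : ‖x - ((i : ℝ) + j) / N‖ ≤ K N / N := by
        have : x - ((i : ℝ) + j) / N = (x * N - (i + j)) / N := by field_simp
        rw [this, Real.norm_eq_abs, abs_div, abs_of_pos hN']
        gcongr
        rw [abs_le]
        constructor <;> linarith
      have h1 : (N : ℝ) / K N * ‖x - ((i : ℝ) + j) / N‖ ≤ 1 := by
        calc _ ≤ (N : ℝ) / K N * (K N / N) := by gcongr
          _ = 1 := by field_simp
      have h2 := (le_abs_self _).trans (hmv.trans h1)
      have h3 : 1 ≤ 1 / c * V (((i : ℝ) + j) / N) := by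
        rw [one_div_mul_eq_div, le_div_iff₀ hc0]
        linarith
      rw [Real.norm_eq_abs, abs_of_pos (hc0.trans_le (hcV x hxm.2))]
      linarith
    have hint := norm_setIntegral_le_of_norm_le_const (μ := volume)
      (by simp) hbound
    refine (le_abs_self _).trans (hint.trans (le_of_eq ?_))
    rw [Real.volume_real_Icc_of_le (by
      have : 0 < 1 / (2 * (N : ℝ)) := by positivity
      linarith)]
    field_simp
    ring
end
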